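/- Let K be a field, A a valuation subring of K with maximal ideal m, I the Iwahori subgroup of SL₂, B(K) the upper-triangular subgroup of SL₂(K), and s = (0,1;−1,0). For x ∈ K let u(x) = (1,x;0,1). If x ∈ K but x ∉ A, then u(x)·s ∈ I·B(K). -/

import Mathlib

open scoped Pointwise

/-- `SL₂(K)`. -/
abbrev SL2 (K : Type*) [Field K] := Matrix.SpecialLinearGroup (Fin 2) K

/-- The Iwahori subgroup of `SL₂(K)` relative to a valuation subring `A` of `K`:
matrices with entries in `A` whose lower-left entry is a nonunit of `A`
(i.e. lies in the maximal ideal of `A`). -/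
def Iwahori {K : Type*} [Field K] (A : ValuationSubring K) : Set (SL2 K) :=
  {g | (∀ i j, g.1 i j ∈ A) ∧ ∃ h : g.1 1 0 ∈ A, (⟨g.1 1 0, h⟩ : A) ∈ nonunits A}

/-- The upper triangular (Borel) subgroup `B(K)` of `SL₂(K)`. -/
def BorelSL2 (K : Type*) [Field K] : Set (SL2 K) := {g | g.1 1 0 = 0}

/-- The Weyl element `s = (0,1;−1,0)`. -/
def sMat (K : Type*) [Field K] : SL2 K :=
  ⟨!![0, 1; -1, 0], by simp [Matrix.det_fin_two_of]⟩

/-- The upper unipotent matrix `u(x) = (1,x;0,1)`. -/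
def uUpper {K : Type*} [Field K] (x : K) : SL2 K :=
  ⟨!![1, x; 0, 1], by simp [Matrix.det_fin_two_of]⟩

/-! Left multiplication by `(1,0;-c,1)` clears the lower-left entry of `g` when `g₁₀ = c g₀₀`, so
such a `g` lies in `I·B(K)` as soon as `c` lies in the maximal ideal of `A`. The first column of
`u(x)·s` is `(-x,-1)`, which gives `c = x⁻¹`, in the maximal ideal because `x ∉ A`. -/

open Matrix.SpecialLinearGroup

theorem coe_transvection_one_zero {R : Type*} [CommRing R] (c : R) :
    (transvection (one_ne_zero : (1 : Fin 2) ≠ 0) c).1 = !![1, 0; c, 1] := by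
  ext i j
  fin_cases i <;> fin_cases j <;> simp [transvection_coe]

theorem uUpper_mul_sMat {K : Type*} [Field K] (x : K) :
    (uUpper x * sMat K).1 = !![-x, 1; -1, 0] := by
  rw [coe_mul]
  simp [uUpper, sMat]

section Iwahori

variable {K : Type*} [Field K] {A : ValuationSubring K}

theorem mem_iwahori_iff {g : SL2 K} :
    g ∈ Iwahori A ↔ (∀ i j, g.1 i j ∈ A) ∧ g.1 1 0 ∈ A.nonunits :=
  and_congr_right fun _ => ValuationSubring.mem_nonunits_iff_exists_mem_maximalIdeal.symm

theorem transvection_one_zero_mem_iwahori {c : K} (hc : c ∈ A.nonunits) :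
    transvection one_ne_zero c ∈ Iwahori A := by
  have hcA : c ∈ A := ValuationSubring.nonunits_subset hc
  rw [mem_iwahori_iff, coe_transvection_one_zero]
  simp [Fin.forall_fin_two, hc, hcA, A.zero_mem, A.one_mem]

theorem transvection_neg_mul_mem_borelSL2 {g : SL2 K} {c : K} (hg : g.1 1 0 = c * g.1 0 0) :
    transvection one_ne_zero (-c) * g ∈ BorelSL2 K := by
  change (transvection one_ne_zero (-c) * g).1 1 0 = 0
  rw [coe_mul, coe_transvection_one_zero]
  simp [Matrix.mul_apply, hg]

theorem mem_iwahori_mul_borelSL2 {g : SL2 K} {c : K} (hc : c ∈ A.nonunits)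
    (hg : g.1 1 0 = c * g.1 0 0) : g ∈ Iwahori A * BorelSL2 K := by
  refine ⟨_, transvection_one_zero_mem_iwahori hc, _, transvection_neg_mul_mem_borelSL2 hg, ?_⟩
  change transvection one_ne_zero c * (transvection one_ne_zero (-c) * g) = g
  rw [← mul_assoc, transvection_mul_neg, one_mul]

end Iwahori

/-- Rank-one length-drop clause of Lemma 4.2: if `x ∉ A`, then
`u(x)·s ∈ I·B(K)`. -/
theorem stmt_2 {K : Type*} [Field K] (A : ValuationSubring K) (x : K) (hx : x ∉ A) :
    uUpper x * sMat K ∈ Iwahori A * BorelSL2 K := by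
  have hx0 : x ≠ 0 := (ne_of_mem_of_not_mem A.zero_mem hx).symm
  have hx_inv : x⁻¹ ∈ A.nonunits := A.inv_mem_nonunits_iff.mpr (Or.inr hx)
  refine mem_iwahori_mul_borelSL2 hx_inv ?_
  rw [uUpper_mul_sMat]
  simp [hx0]
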